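/- Let a, b, c, d be four pairwise distinct vertices of G with a adjacent to b, b adjacent to c, c adjacent to d, and d adjacent to a (a 4-cycle). Then either all four vertices lie in the left copy (are of the form inl _), or all four lie in the right copy (are of the form inr _), or exactly two of them lie in each copy and in that case the four vertices are inl u, inl v, inr u, inr v for some u ≠ v with inl u adjacent to inl v and inr u adjacent to inr v in G. -/

import Mathlib

/-!
The only cross edges are `inl u ~ inr u`, so each vertex has at most one neighbour in the opposite
copy. On a 4-cycle of distinct vertices, no vertex can therefore have both of its cycle-neighbours
in the opposite copy, which excludes the `3 + 1` splits and the alternating `2 + 2` splits. In the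
remaining `2 + 2` splits each copy contains one edge of the cycle, and the two crossing edges of
the cycle identify the endpoints of these two edges.
-/


/-- In a graph `G` on `Fin n ⊕ Fin n` whose cross edges form a perfect matching
between the two copies, every 4-cycle `a b c d` either lies entirely in the left copy, or
entirely in the right copy, or consists of the vertices `inl u, inl v, inr u, inr v` for some
`u ≠ v` with `inl u` adjacent to `inl v` and `inr u` adjacent to `inr v`. -/
theorem c4_in_matched_double_graph {n : ℕ} (G : SimpleGraph (Fin n ⊕ Fin n))
    (hmatch : ∀ u v : Fin n, G.Adj (Sum.inl u) (Sum.inr v) ↔ u = v)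
    (a b c d : Fin n ⊕ Fin n)
    (hab : a ≠ b) (hac : a ≠ c) (had : a ≠ d) (hbc : b ≠ c) (hbd : b ≠ d) (hcd : c ≠ d)
    (hAab : G.Adj a b) (hAbc : G.Adj b c) (hAcd : G.Adj c d) (hAda : G.Adj d a) :
    (∃ a' b' c' d' : Fin n,
        a = Sum.inl a' ∧ b = Sum.inl b' ∧ c = Sum.inl c' ∧ d = Sum.inl d') ∨
    (∃ a' b' c' d' : Fin n,
        a = Sum.inr a' ∧ b = Sum.inr b' ∧ c = Sum.inr c' ∧ d = Sum.inr d') ∨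
    (∃ u v : Fin n, u ≠ v ∧ G.Adj (Sum.inl u) (Sum.inl v) ∧ G.Adj (Sum.inr u) (Sum.inr v) ∧
        ({a, b, c, d} : Finset (Fin n ⊕ Fin n)) =
          {Sum.inl u, Sum.inl v, Sum.inr u, Sum.inr v}) := by
  have hmatch' : ∀ u v : Fin n, G.Adj (Sum.inr u) (Sum.inl v) ↔ v = u := fun u v => by
    rw [G.adj_comm, hmatch]
  rcases a with a | a <;> rcases b with b | b <;> rcases c with c | c <;> rcases d with d | d <;>
    (try simp only [hmatch, hmatch'] at hAab hAbc hAcd hAda) <;> subst_vars <;>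
    -- the splits in which two crossing edges at one vertex force two cycle vertices to coincide
    try contradiction
  · exact Or.inl ⟨_, _, _, _, rfl, rfl, rfl, rfl⟩
  all_goals first
    | exact Or.inr (Or.inl ⟨_, _, _, _, rfl, rfl, rfl, rfl⟩)
    | refine Or.inr (Or.inr ⟨_, _, ?_, ‹G.Adj (Sum.inl _) (Sum.inl _)›, ?_, ?_⟩)
      · rintro rfl
        contradiction
      -- the two copies of the edge are traversed by the cycle in opposite directions
      · exact G.adj_symm (by assumption)
      · ext x
        simp only [Finset.mem_insert, Finset.mem_singleton]
        tauto
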